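/- arXiv:1907.11038 — 3 statements merged into one kernel-verified Lean document; each statement's English description precedes it below -/
import Mathlib

section
/- (Main theorem: the multiplication rule P^t(A ∩ B) = P^t(A|B) P^t(B).) Let Ω and Ω_T be measurable spaces, μ a σ-finite measure on Ω, T : Ω → Ω_T measurable, and ν a σ-finite measure on Ω_T with T_*μ absolutely continuous with respect to ν. Let A and B be measurable sets with 0 < μ(B) < ∞. Let g_{A∩B} and g_B be measurable functions Ω_T → [0,∞) with μ(A ∩ B ∩ T⁻¹(C)) = ∫_C g_{A∩B} dν and μ(B ∩ T⁻¹(C)) = ∫_C g_B dν for all measurable C, and let h : Ω_T → [0,∞) be a measurable function satisfying ∫ φ h d(T_*Q) = ∫_A φ∘T dQ for all measurable φ ≥ 0, where Q = P(·|B). Then g_{A∩B}(t) = h(t) · g_B(t) for ν-almost every t. -/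
/-! Testing the defining property of `h` on the indicator of a measurable set `C` gives
`∫_C h d(T_* μ|_B) = μ (A ∩ B ∩ T⁻¹ C) = ∫_C g_{A∩B} dν`, the normalisation `(μ B)⁻¹` cancelling
because `0 < μ B < ∞`. Since `T_* μ|_B` has density `g_B` with respect to `ν`, the left side is
`∫_C h g_B dν`. Functions with equal integrals over all measurable sets agree almost everywhere
when `ν` is σ-finite. -/

open MeasureTheory Set
open scoped ENNReal NNReal

/-- Main theorem (multiplication rule `P^t(A ∩ B) = P^t(A|B) P^t(B)`): with `g_{A∩B}` and
`g_B` densities of `T_*(μ|_{A∩B})` and `T_*(μ|_B)` with respect to `ν`, and `h` the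
Kolmogorov conditional probability `t ↦ P^t(A|B)` for `Q = P(·|B)`, one has
`g_{A∩B}(t) = h(t) · g_B(t)` for ν-almost every `t`. -/
theorem renyi_multiplication_rule
    {Ω ΩT : Type*} [MeasurableSpace Ω] [MeasurableSpace ΩT]
    (μ : Measure Ω) [SigmaFinite μ] (T : Ω → ΩT) (hT : Measurable T)
    (ν : Measure ΩT) [SigmaFinite ν] (hdom : μ.map T ≪ ν)
    (A B : Set Ω) (hA : MeasurableSet A) (hB : MeasurableSet B)
    (hB0 : 0 < μ B) (hBfin : μ B < ∞)
    (Q : Measure Ω) (hQ : Q = (μ B)⁻¹ • μ.restrict B)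
    (gAB gB : ΩT → NNReal) (hgAB : Measurable gAB) (hgB : Measurable gB)
    (hgABdens : ∀ C : Set ΩT, MeasurableSet C →
      μ (A ∩ B ∩ T ⁻¹' C) = ∫⁻ t in C, (gAB t : ℝ≥0∞) ∂ν)
    (hgBdens : ∀ C : Set ΩT, MeasurableSet C →
      μ (B ∩ T ⁻¹' C) = ∫⁻ t in C, (gB t : ℝ≥0∞) ∂ν)
    (h : ΩT → NNReal) (hh : Measurable h)
    (hhdens : ∀ φ : ΩT → ℝ≥0∞, Measurable φ →
      ∫⁻ t, φ t * (h t : ℝ≥0∞) ∂(Q.map T) = ∫⁻ ω in A, φ (T ω) ∂Q) :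
    ∀ᵐ t ∂ν, gAB t = h t * gB t := by
  -- `T_* μ|_B` has density `g_B` with respect to `ν`
  have hmap : (μ.restrict B).map T = ν.withDensity (fun t => (gB t : ℝ≥0∞)) := by
    ext C hC
    rw [Measure.map_apply hT hC, Measure.restrict_apply (hT hC), withDensity_apply _ hC,
      ← hgBdens C hC, inter_comm]
  have key : (fun t => (gAB t : ℝ≥0∞)) =ᵐ[ν] fun t => (gB t : ℝ≥0∞) * (h t : ℝ≥0∞) := by
    refine ae_eq_of_forall_setLIntegral_eq_of_sigmaFinite hgAB.coe_nnreal_ennreal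
      (hgB.coe_nnreal_ennreal.mul hh.coe_nnreal_ennreal) fun C hC _ => ?_
    have hφ : Measurable (C.indicator (1 : ΩT → ℝ≥0∞)) := measurable_one.indicator hC
    have e := hhdens _ hφ
    have hR : ∫⁻ ω in A, C.indicator (1 : ΩT → ℝ≥0∞) (T ω) ∂Q
        = (μ B)⁻¹ * μ (A ∩ B ∩ T ⁻¹' C) := by
      have : (fun ω => C.indicator (1 : ΩT → ℝ≥0∞) (T ω)) = (T ⁻¹' C).indicator 1 := rfl
      rw [this, lintegral_indicator_one (hT hC), Measure.restrict_apply (hT hC), hQ,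
        Measure.smul_apply, smul_eq_mul, Measure.restrict_apply ((hT hC).inter hA)]
      congr 2
      ext ω
      simp only [mem_inter_iff]
      tauto
    have hL : ∫⁻ t, C.indicator (1 : ΩT → ℝ≥0∞) t * (h t : ℝ≥0∞) ∂(Q.map T)
        = (μ B)⁻¹ * ∫⁻ t in C, (gB t : ℝ≥0∞) * (h t : ℝ≥0∞) ∂ν := by
      rw [hQ, Measure.map_smul, lintegral_smul_measure, smul_eq_mul, hmap,
        lintegral_withDensity_eq_lintegral_mul (g := fun t => C.indicator 1 t * (h t : ℝ≥0∞)) _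
          hgB.coe_nnreal_ennreal (hφ.mul hh.coe_nnreal_ennreal), ← lintegral_indicator hC]
      congr 2
      ext t
      by_cases ht : t ∈ C <;> simp [ht]
    rw [hL, hR] at e
    rw [← hgABdens C hC]
    exact ((ENNReal.mul_right_inj (ENNReal.inv_ne_zero.2 hBfin.ne)
      (ENNReal.inv_ne_top.2 hB0.ne')).1 e).symm
  filter_upwards [key] with t ht
  rw [mul_comm]
  exact_mod_cast ht
end

section
/- Let Ω and Ω_T be measurable spaces, μ a σ-finite measure on Ω, T : Ω → Ω_T measurable, and ν a σ-finite measure on Ω_T with T_*μ absolutely continuous with respect to ν. Let A and B be measurable sets with 0 < μ(B) < ∞, and let g_{A∩B}, g_B, h be as in the main theorem. Then for every measurable C ⊆ Ω_T the integral identity ∫_C g_{A∩B}(t) ν(dt) = ∫_C h(t) g_B(t) ν(dt) holds. -/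
/-!
By the defining property of `g_B`, the pushforward under `T` of `μ` restricted to `B` is `ν` with
density `g_B`. Hence testing the defining property of `h` against the indicator of `C` gives
`μ(B)⁻¹ ∫_C h g_B dν` on the left-hand side and
`Q(A ∩ T⁻¹(C)) = μ(B)⁻¹ μ(A ∩ B ∩ T⁻¹(C)) = μ(B)⁻¹ ∫_C g_{A∩B} dν` on the right-hand side; the factor
`μ(B)⁻¹` is neither `0` nor `∞` and cancels.
-/

open MeasureTheory Set
open scoped ENNReal NNReal

/-- Integral form of the multiplication rule: for every measurable `C ⊆ Ω_T`,
`∫_C g_{A∩B}(t) ν(dt) = ∫_C h(t) g_B(t) ν(dt)`. -/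
theorem renyi_multiplication_rule_integral_form
    {Ω ΩT : Type*} [MeasurableSpace Ω] [MeasurableSpace ΩT]
    (μ : Measure Ω) [SigmaFinite μ] (T : Ω → ΩT) (hT : Measurable T)
    (ν : Measure ΩT) [SigmaFinite ν] (hdom : μ.map T ≪ ν)
    (A B : Set Ω) (hA : MeasurableSet A) (hB : MeasurableSet B)
    (hB0 : 0 < μ B) (hBfin : μ B < ∞)
    (Q : Measure Ω) (hQ : Q = (μ B)⁻¹ • μ.restrict B)
    (gAB gB : ΩT → NNReal) (hgAB : Measurable gAB) (hgB : Measurable gB)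
    (hgABdens : ∀ C : Set ΩT, MeasurableSet C →
      μ (A ∩ B ∩ T ⁻¹' C) = ∫⁻ t in C, (gAB t : ℝ≥0∞) ∂ν)
    (hgBdens : ∀ C : Set ΩT, MeasurableSet C →
      μ (B ∩ T ⁻¹' C) = ∫⁻ t in C, (gB t : ℝ≥0∞) ∂ν)
    (h : ΩT → NNReal) (hh : Measurable h)
    (hhdens : ∀ φ : ΩT → ℝ≥0∞, Measurable φ →
      ∫⁻ t, φ t * (h t : ℝ≥0∞) ∂(Q.map T) = ∫⁻ ω in A, φ (T ω) ∂Q) :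
    ∀ C : Set ΩT, MeasurableSet C →
      ∫⁻ t in C, (gAB t : ℝ≥0∞) ∂ν = ∫⁻ t in C, (h t : ℝ≥0∞) * (gB t : ℝ≥0∞) ∂ν := by
  intro C hC
  -- `g_B` is the `ν`-density of the pushforward of `μ` restricted to `B`.
  have hmap : (μ.restrict B).map T = ν.withDensity (fun t => (gB t : ℝ≥0∞)) := by
    ext D hD
    rw [Measure.map_apply hT hD, Measure.restrict_apply (hT hD), inter_comm, hgBdens D hD,
      withDensity_apply _ hD]
  have hc0 : (μ B)⁻¹ ≠ 0 := ENNReal.inv_ne_zero.mpr hBfin.ne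
  have hct : (μ B)⁻¹ ≠ ∞ := ENNReal.inv_ne_top.mpr hB0.ne'
  have hφ := hhdens (C.indicator 1) (measurable_one.indicator hC)
  have hL : ∫⁻ t, C.indicator (1 : ΩT → ℝ≥0∞) t * (h t : ℝ≥0∞) ∂(Q.map T)
      = (μ B)⁻¹ * ∫⁻ t in C, (h t : ℝ≥0∞) * (gB t : ℝ≥0∞) ∂ν := by
    have hind : (fun t => C.indicator (1 : ΩT → ℝ≥0∞) t * (h t : ℝ≥0∞))
        = C.indicator (fun t => (h t : ℝ≥0∞)) := by
      ext t
      by_cases ht : t ∈ C <;> simp [ht]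
    rw [hind, lintegral_indicator hC, hQ, Measure.map_smul, Measure.restrict_smul,
      lintegral_smul_measure, hmap, restrict_withDensity hC,
      lintegral_withDensity_eq_lintegral_mul _ hgB.coe_nnreal_ennreal hh.coe_nnreal_ennreal]
    simp [mul_comm]
  have hR : ∫⁻ ω in A, C.indicator (1 : ΩT → ℝ≥0∞) (T ω) ∂Q
      = (μ B)⁻¹ * ∫⁻ t in C, (gAB t : ℝ≥0∞) ∂ν := by
    have hind : (fun ω => C.indicator (1 : ΩT → ℝ≥0∞) (T ω)) = (T ⁻¹' C).indicator 1 := rfl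
    rw [hind, lintegral_indicator_one (hT hC), hQ, Measure.restrict_smul, Measure.smul_apply,
      Measure.restrict_restrict hA, Measure.restrict_apply (hT hC), inter_comm, hgABdens C hC,
      smul_eq_mul]
  rw [hL, hR] at hφ
  exact ((ENNReal.mul_right_inj hc0 hct).mp hφ).symm
end

section
/- (Uniqueness of the representing measure of a Rényi state up to a positive constant.) Let Ω be a measurable space and let μ and λ be σ-finite measures on Ω with μ(Ω) > 0 and λ(Ω) > 0. Suppose that 𝓑_μ = 𝓑_λ, i.e. {B measurable : 0 < μ(B) < ∞} = {B measurable : 0 < λ(B) < ∞}, and that μ(A ∩ B)/μ(B) = λ(A ∩ B)/λ(B) for every measurable set A and every B ∈ 𝓑_μ. Then there exists a constant c > 0 such that λ = c · μ. -/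
/-!
Let `S n` be an increasing exhaustion of `Ω` by sets of finite `μ`-measure. As `μ univ > 0`, some
`S N` has positive measure, so every `S n` with `n ≥ N` lies in the common bunch. Conditioning on
such an `S n` shows that on its subsets `lam = (lam (S n) / μ (S n)) • μ`; testing this on `S N`
shows that the ratio does not depend on `n`. Continuity from below along the exhaustion then gives
`lam = c • μ` with `c = lam (S N) / μ (S N)`.
-/

open MeasureTheory Set
open scoped ENNReal NNReal

lemma eq_ratio_mul_of_div_eq_div {x m y l : ℝ≥0∞} (hl : l ≠ 0)
    (hl' : l ≠ ∞) (h : x / m = y / l) : y = l / m * x := by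
  calc y = y / l * l := (ENNReal.div_mul_cancel hl hl').symm
    _ = x / m * l := by rw [h]
    _ = l / m * x := by simp only [div_eq_mul_inv]; ring

/-- Uniqueness of the representing measure of a Rényi state up to a positive constant:
if σ-finite measures `μ` and `lam` with `μ(Ω) > 0`, `lam(Ω) > 0` have the same maximal
bunch and induce the same conditional probabilities `A ↦ μ(A ∩ B)/μ(B)` on it, then
`lam = c • μ` for some constant `c > 0`. -/
theorem renyi_state_representation_unique
    {Ω : Type*} [MeasurableSpace Ω]
    (μ lam : Measure Ω) [SigmaFinite μ] [SigmaFinite lam]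
    (hμ : 0 < μ Set.univ) (hlam : 0 < lam Set.univ)
    (hbunch : {B : Set Ω | MeasurableSet B ∧ 0 < μ B ∧ μ B < ∞} =
              {B : Set Ω | MeasurableSet B ∧ 0 < lam B ∧ lam B < ∞})
    (hcond : ∀ A : Set Ω, MeasurableSet A →
      ∀ B ∈ {B : Set Ω | MeasurableSet B ∧ 0 < μ B ∧ μ B < ∞},
        μ (A ∩ B) / μ B = lam (A ∩ B) / lam B) :
    ∃ c : NNReal, 0 < c ∧ lam = c • μ := by
  set S := spanningSets μ with hS
  have hSmeas : ∀ n, MeasurableSet (S n) := measurableSet_spanningSets μ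
  have hSmono : Monotone S := monotone_spanningSets μ
  have hSfin : ∀ n, μ (S n) < ∞ := measure_spanningSets_lt_top μ
  obtain ⟨N, hN⟩ : ∃ N, 0 < μ (S N) := by
    by_contra! h
    have h0 : μ (⋃ n, S n) = 0 := measure_iUnion_null fun n => le_antisymm (h n) bot_le
    rw [hS, iUnion_spanningSets] at h0
    exact hμ.ne' h0
  have hmem : ∀ n, N ≤ n → S n ∈ {B : Set Ω | MeasurableSet B ∧ 0 < μ B ∧ μ B < ∞} :=
    fun n hn => ⟨hSmeas n, hN.trans_le (measure_mono (hSmono hn)), hSfin n⟩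
  have hmem' : ∀ n, N ≤ n → 0 < lam (S n) ∧ lam (S n) < ∞ := fun n hn => by
    have h := hmem n hn
    rw [hbunch] at h
    exact h.2
  have hratio : ∀ A, MeasurableSet A → ∀ n, N ≤ n →
      lam (A ∩ S n) = lam (S n) / μ (S n) * μ (A ∩ S n) := fun A hA n hn =>
    eq_ratio_mul_of_div_eq_div (hmem' n hn).1.ne'
      (hmem' n hn).2.ne (hcond A hA _ (hmem n hn))
  have hconst : ∀ n, N ≤ n → lam (S n) / μ (S n) = lam (S N) / μ (S N) := fun n hn => by
    have h := hratio (S N) (hSmeas N) n hn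
    rw [inter_eq_left.2 (hSmono hn)] at h
    rw [h, ENNReal.mul_div_cancel_right hN.ne' (hSfin N).ne]
  have hctop : lam (S N) / μ (S N) ≠ ∞ := ENNReal.div_ne_top (hmem' N le_rfl).2.ne hN.ne'
  have hcpos : lam (S N) / μ (S N) ≠ 0 :=
    (ENNReal.div_pos (hmem' N le_rfl).1.ne' (hSfin N).ne).ne'
  refine ⟨(lam (S N) / μ (S N)).toNNReal, ENNReal.toNNReal_pos hcpos hctop, ?_⟩
  ext A hA
  have hmono : Monotone fun n => A ∩ S (N + n) := fun i j hij =>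
    inter_subset_inter_right A (hSmono (Nat.add_le_add_left hij N))
  have hunion : ⋃ n, A ∩ S (N + n) = A := by
    refine subset_antisymm (iUnion_subset fun _ => inter_subset_left) fun x hx => ?_
    have hx' : x ∈ ⋃ n, S n := by rw [hS, iUnion_spanningSets]; trivial
    obtain ⟨n, hn⟩ := mem_iUnion.1 hx'
    exact mem_iUnion.2 ⟨n, hx, hSmono (Nat.le_add_left n N) hn⟩
  have hsup : ∀ ν : Measure Ω, ν A = ⨆ n, ν (A ∩ S (N + n)) := fun ν => by
    rw [← hmono.measure_iUnion, hunion]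
  rw [Measure.smul_apply, ENNReal.smul_def, ENNReal.coe_toNNReal hctop, smul_eq_mul,
    hsup lam, hsup μ, ENNReal.mul_iSup]
  refine iSup_congr fun n => ?_
  rw [hratio A hA _ (Nat.le_add_right N n), hconst _ (Nat.le_add_right N n)]
end
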